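/- arXiv:1610.03675 — 8 statements merged into one kernel-verified Lean document; each statement's English description precedes it below -/
import Mathlib

section
/- If the bilinear form a is symmetric, then the solution operator T = ι ∘ S : H → H is self-adjoint, i.e. ⟨ι(S f), g⟩_H = ⟨f, ι(S g)⟩_H for all f, g ∈ H. -/
open scoped RealInnerProductSpace

/-- If the bilinear form `a` is symmetric, then the solution operator
`T = ι ∘ S : H → H` is self-adjoint: `⟪ι (S f), g⟫ = ⟪f, ι (S g)⟫` for all `f, g ∈ H`.
Here `S f ∈ V` is the (unique, by Lax–Milgram) solution of `a (S f) v = ⟪f, ι v⟫` for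
all `v ∈ V`. -/
theorem stmt1
    {V H : Type*}
    [NormedAddCommGroup V] [InnerProductSpace ℝ V] [CompleteSpace V]
    [NormedAddCommGroup H] [InnerProductSpace ℝ H] [CompleteSpace H]
    (ι : V →L[ℝ] H) (a : V →L[ℝ] V →L[ℝ] ℝ)
    (α : ℝ) (hα : 0 < α) (hcoer : ∀ v : V, α * ‖v‖ ^ 2 ≤ a v v)
    (hsymm : ∀ u v : V, a u v = a v u)
    (S : H → V) (hS : ∀ f : H, ∀ v : V, a (S f) v = ⟪f, ι v⟫) :
    ∀ f g : H, ⟪ι (S f), g⟫ = ⟪f, ι (S g)⟫ := by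
  intro f g
  rw [real_inner_comm, ← hS g (S f), ← hS f (S g)]
  exact hsymm _ _
end

section
/- If the bilinear form a is symmetric and ι has dense range in H, then the solution operator T = ι ∘ S is positive definite: ⟨f, ι(S f)⟩_H > 0 for every f ∈ H with f ≠ 0. -/
open scoped RealInnerProductSpace

/-- If the bilinear form `a` is symmetric and `ι` has dense range in `H`,
then the solution operator `T = ι ∘ S` is positive definite: `⟪f, ι (S f)⟫ > 0` for every
`f ∈ H` with `f ≠ 0`.  Here `S f ∈ V` is the (unique, by Lax–Milgram) solution of
`a (S f) v = ⟪f, ι v⟫` for all `v ∈ V`. -/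
theorem stmt2
    {V H : Type*}
    [NormedAddCommGroup V] [InnerProductSpace ℝ V] [CompleteSpace V]
    [NormedAddCommGroup H] [InnerProductSpace ℝ H] [CompleteSpace H]
    (ι : V →L[ℝ] H) (a : V →L[ℝ] V →L[ℝ] ℝ)
    (α : ℝ) (hα : 0 < α) (hcoer : ∀ v : V, α * ‖v‖ ^ 2 ≤ a v v)
    (hsymm : ∀ u v : V, a u v = a v u)
    (hdense : DenseRange ι)
    (S : H → V) (hS : ∀ f : H, ∀ v : V, a (S f) v = ⟪f, ι v⟫) :
    ∀ f : H, f ≠ 0 → 0 < ⟪f, ι (S f)⟫ := by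
  intro f hf
  rw [← hS f (S f)]
  have hne : S f ≠ 0 := by
    intro h0
    apply hf
    have horth : ∀ v : V, ⟪f, ι v⟫ = 0 := by
      intro v
      rw [← hS f v, h0]
      simp
    have hfun : (fun x : H => ⟪f, x⟫) = fun _ => (0 : ℝ) :=
      hdense.equalizer (by fun_prop) (by fun_prop) (funext horth)
    exact inner_self_eq_zero.mp (congrFun hfun f)
  have hpos : 0 < ‖S f‖ := norm_pos_iff.mpr hne
  exact lt_of_lt_of_le (by positivity) (hcoer (S f))
end

section
/- If ι : V → H is a compact operator, then the solution operator T = ι ∘ S : H → H is a compact operator. -/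
open scoped RealInnerProductSpace

/-- If `ι : V → H` is a compact operator, then the solution operator
`T = ι ∘ S : H → H` is a compact operator.  Here `S f ∈ V` is the (unique, by
Lax–Milgram) solution of `a (S f) v = ⟪f, ι v⟫` for all `v ∈ V`. -/
theorem stmt3
    {V H : Type*}
    [NormedAddCommGroup V] [InnerProductSpace ℝ V] [CompleteSpace V]
    [NormedAddCommGroup H] [InnerProductSpace ℝ H] [CompleteSpace H]
    (ι : V →L[ℝ] H) (a : V →L[ℝ] V →L[ℝ] ℝ)
    (α : ℝ) (hα : 0 < α) (hcoer : ∀ v : V, α * ‖v‖ ^ 2 ≤ a v v)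
    (S : H → V) (hS : ∀ f : H, ∀ v : V, a (S f) v = ⟪f, ι v⟫)
    (hcompact : IsCompactOperator ι) :
    IsCompactOperator (fun f : H => ι (S f)) := by
  have hc : IsCoercive a := ⟨α, hα, fun v => by
    have h := hcoer v
    rwa [pow_two, ← mul_assoc] at h⟩
  -- the solution operator is the Lax-Milgram inverse composed with the adjoint of the embedding
  have key : ∀ f : H, S f =
      ((hc.continuousLinearEquivOfBilin.symm : V →L[ℝ] V).comp
        (ContinuousLinearMap.adjoint ι)) f := by
    intro f
    have h := hc.unique_continuousLinearEquivOfBilin (v := S f)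
      (f := ContinuousLinearMap.adjoint ι f) (fun w => by
        rw [ContinuousLinearMap.adjoint_inner_left, hS])
    simp [h]
  have h := hcompact.comp_clm ((hc.continuousLinearEquivOfBilin.symm : V →L[ℝ] V).comp
        (ContinuousLinearMap.adjoint ι))
  have e : (fun f : H => ι (S f)) = ι ∘ ((hc.continuousLinearEquivOfBilin.symm : V →L[ℝ] V).comp
        (ContinuousLinearMap.adjoint ι)) := by
    funext f
    rw [key f]
    rfl
  rw [e]
  exact h
end

section
/- Assume ι is injective. (a) If u ∈ V, u ≠ 0, and λ ∈ ℝ satisfy a(u, v) = λ ⟨ι u, ι v⟩_H for all v ∈ V, then λ ≥ α ‖u‖_V² / ‖ι u‖_H² > 0 and T(ι u) = λ⁻¹ (ι u). (b) Conversely, if w ∈ H, w ≠ 0, and μ ∈ ℝ, μ ≠ 0, satisfy T w = μ w, then u := S w is nonzero, w = μ⁻¹ ι u, and a(u, v) = μ⁻¹ ⟨ι u, ι v⟩_H for all v ∈ V. Thus the eigenvalues of the variational eigenvalue problem and of T are inverse of each other and the eigenspaces coincide. -/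
open scoped RealInnerProductSpace

/-- Assume `ι` is injective.  (a) If `u ≠ 0` and `λ` satisfy
`a u v = λ ⟪ι u, ι v⟫` for all `v`, then `λ ≥ α ‖u‖² / ‖ι u‖² > 0` and
`T (ι u) = λ⁻¹ (ι u)` where `T = ι ∘ S`.  (b) Conversely, if `w ≠ 0` and `μ ≠ 0`
satisfy `T w = μ w`, then `u := S w` is nonzero, `w = μ⁻¹ ι u`, and
`a u v = μ⁻¹ ⟪ι u, ι v⟫` for all `v`.  Here `S f ∈ V` is the (unique, by
Lax–Milgram) solution of `a (S f) v = ⟪f, ι v⟫` for all `v ∈ V`. -/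
theorem stmt4
    {V H : Type*}
    [NormedAddCommGroup V] [InnerProductSpace ℝ V] [CompleteSpace V]
    [NormedAddCommGroup H] [InnerProductSpace ℝ H] [CompleteSpace H]
    (ι : V →L[ℝ] H) (a : V →L[ℝ] V →L[ℝ] ℝ)
    (α : ℝ) (hα : 0 < α) (hcoer : ∀ v : V, α * ‖v‖ ^ 2 ≤ a v v)
    (hinj : Function.Injective ι)
    (S : H → V) (hS : ∀ f : H, ∀ v : V, a (S f) v = ⟪f, ι v⟫) :
    (∀ u : V, u ≠ 0 → ∀ lam : ℝ,
      (∀ v : V, a u v = lam * ⟪ι u, ι v⟫) →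
        0 < α * ‖u‖ ^ 2 / ‖ι u‖ ^ 2 ∧
        α * ‖u‖ ^ 2 / ‖ι u‖ ^ 2 ≤ lam ∧
        ι (S (ι u)) = lam⁻¹ • ι u) ∧
    (∀ w : H, w ≠ 0 → ∀ mu : ℝ, mu ≠ 0 →
      ι (S w) = mu • w →
        S w ≠ 0 ∧
        w = mu⁻¹ • ι (S w) ∧
        ∀ v : V, a (S w) v = mu⁻¹ * ⟪ι (S w), ι v⟫) := by
  constructor
  · intro u hu lam h
    have hιu : ι u ≠ 0 := fun h0 => hu (hinj (by rw [h0, map_zero]))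
    have h1 : 0 < ‖u‖ := norm_pos_iff.mpr hu
    have h2 : 0 < ‖ι u‖ := norm_pos_iff.mpr hιu
    have hpos : 0 < α * ‖u‖ ^ 2 / ‖ι u‖ ^ 2 := by positivity
    have hle : α * ‖u‖ ^ 2 / ‖ι u‖ ^ 2 ≤ lam := by
      rw [div_le_iff₀ (by positivity)]
      have h3 := hcoer u
      rw [h u, real_inner_self_eq_norm_sq] at h3
      exact h3
    have hlam : lam ≠ 0 := (lt_of_lt_of_le hpos hle).ne'
    refine ⟨hpos, hle, ?_⟩
    have key : ∀ v : V, a (S (ι u) - lam⁻¹ • u) v = 0 := by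
      intro v
      simp only [map_sub, map_smul, ContinuousLinearMap.sub_apply,
        ContinuousLinearMap.smul_apply, smul_eq_mul, hS, h v]
      rw [inv_mul_cancel_left₀ hlam, sub_self]
    have h4 := hcoer (S (ι u) - lam⁻¹ • u)
    rw [key] at h4
    have h5 : S (ι u) - lam⁻¹ • u = 0 := by
      by_contra hne
      have h6 : 0 < ‖S (ι u) - lam⁻¹ • u‖ := norm_pos_iff.mpr hne
      have h7 : 0 < α * ‖S (ι u) - lam⁻¹ • u‖ ^ 2 := by positivity
      linarith
    rw [sub_eq_zero.mp h5, map_smul]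
  · intro w hw mu hmu h
    have hw' : w = mu⁻¹ • ι (S w) := by rw [h, inv_smul_smul₀ hmu]
    refine ⟨?_, hw', ?_⟩
    · intro h0
      rw [h0, map_zero, smul_zero] at hw'
      exact hw hw'
    · intro v
      rw [hS, h, real_inner_smul_left, inv_mul_cancel_left₀ hmu]
end

section
/- Assume the bilinear form a is symmetric, ι is injective, compact, and has dense range, H is separable, and V is infinite dimensional. Then there exist a nondecreasing sequence (λ_k)_{k∈ℕ} of positive real numbers with λ_k → +∞ and elements u_k ∈ V satisfying a(u_k, v) = λ_k ⟨ι u_k, ι v⟩_H for all v ∈ V, such that the family (ι u_k)_{k∈ℕ} is a Hilbert (orthonormal) basis of H. -/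
open scoped RealInnerProductSpace

theorem exists_sorted_enum {J : Type*} [Infinite J] (l : J → ℝ)
    (hl : ∀ c : ℝ, {j | l j ≤ c}.Finite) :
    ∃ e : ℕ ≃ J, Monotone (fun n => l (e n)) := by
  classical
  have hc : Countable J := by
    rw [← Set.countable_univ_iff]
    have : (Set.univ : Set J) = ⋃ n : ℕ, {j | l j ≤ n} := by
      ext j
      simp only [Set.mem_univ, Set.mem_iUnion, Set.mem_setOf_eq, true_iff]
      exact exists_nat_ge (l j)
    rw [this]
    exact Set.countable_iUnion fun n => (hl n).countable
  obtain ⟨enc, henc⟩ := hc.exists_injective_nat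
  let P : J → J → Prop := fun i j => l i < l j ∨ (l i = l j ∧ enc i < enc j)
  let r : J → ℕ := fun j => {i | P i j}.ncard
  have hfin : ∀ j, {i | P i j}.Finite := fun j => (hl (l j)).subset (by
    rintro i (h | h)
    · exact h.le
    · exact h.1.le)
  have hP : ∀ i j, P i j → r i < r j := by
    intro i j hij
    apply Set.ncard_lt_ncard _ (hfin j)
    refine ⟨fun k hk => ?_, fun h => ?_⟩
    · simp only [P, Set.mem_setOf_eq] at *
      grind
    · have := h (show i ∈ {i | P i j} from hij)
      simp [P] at this
  have htri : ∀ i j, i ≠ j → P i j ∨ P j i := by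
    intro i j hij
    have := henc.ne hij
    simp only [P]
    rcases lt_trichotomy (l i) (l j) with h | h | h
    · simp [h]
    · rcases lt_or_gt_of_ne this with h' | h' <;> simp [h, h']
    · simp [h]
  have hr : Function.Injective r := by
    intro i j hij
    by_contra hne
    rcases htri i j hne with h | h
    · exact absurd (hP _ _ h) (by omega)
    · exact absurd (hP _ _ h) (by omega)
  have hle : ∀ i j, r i ≤ r j → l i ≤ l j := by
    intro i j hij
    by_contra! h
    exact absurd (hP j i (Or.inl h)) (by omega)
  haveI : Infinite (Set.range r) := (Set.infinite_range_of_injective hr).to_subtype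
  let o := Nat.Subtype.orderIsoOfNat (Set.range r)
  let q := Equiv.ofInjective r hr
  refine ⟨o.toEquiv.trans q.symm, fun m n hmn => hle _ _ ?_⟩
  have h1 : ∀ x : Set.range r, r (q.symm x) = x := fun x =>
    congrArg Subtype.val (q.apply_symm_apply x)
  simp only [Equiv.trans_apply, h1]
  exact o.monotone hmn

theorem finite_of_orthonormal_compact {H J : Type*} [NormedAddCommGroup H] [InnerProductSpace ℝ H]
    (e : J → H) (he : Orthonormal ℝ e) (K : Set H) (hK : IsCompact K) (s : Set J)
    (hs : ∀ j ∈ s, e j ∈ K) : s.Finite := by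
  by_contra hinf
  have hinf : s.Infinite := hinf
  let f := hinf.natEmbedding
  obtain ⟨x, -, φ, hφ, hx⟩ := hK.tendsto_subseq (x := fun n => e (f n)) (fun n => hs _ (f n).2)
  have hC := hx.cauchySeq
  rw [Metric.cauchySeq_iff'] at hC
  obtain ⟨N, hN⟩ := hC 1 one_pos
  have h := hN (N + 1) (by omega)
  have hne : ((f (φ (N + 1)) : s) : J) ≠ f (φ N) := by
    intro h
    have := hφ.injective (f.injective (Subtype.ext h))
    omega
  simp only [Function.comp, dist_eq_norm] at h
  have h2 := norm_sub_sq_real (e (f (φ (N + 1)))) (e (f (φ N)))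
  rw [he.2 hne, he.1, he.1] at h2
  nlinarith [norm_nonneg (e (f (φ (N + 1))) - e (f (φ N)))]

theorem exists_orthonormal_eigen.{z} {H : Type z} [NormedAddCommGroup H] [InnerProductSpace ℝ H]
    [CompleteSpace H] (T : H →L[ℝ] H) (hT : IsCompactOperator T) (hs : T.IsSymmetric) :
    ∃ (J : Type z) (e : J → H) (μ : J → ℝ), Orthonormal ℝ e ∧ (∀ j, T (e j) = μ j • e j) ∧
      (Submodule.span ℝ (Set.range e))ᗮ = ⊥ := by
  classical
  let E : ℝ → Submodule ℝ H := fun μ => Module.End.eigenspace (T : Module.End ℝ H) μ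
  have hEc : ∀ μ, CompleteSpace (E μ) := by
    intro μ
    have : IsClosed (E μ : Set H) := by
      have : (E μ : Set H) = {x | T x = μ • x} := by
        ext x
        simp [E, Module.End.mem_eigenspace_iff]
      rw [this]
      exact isClosed_eq T.continuous (continuous_const_smul μ)
    exact this.completeSpace_coe
  choose w b hb using fun μ => exists_hilbertBasis ℝ (E μ)
  have hof : OrthogonalFamily ℝ (fun μ => E μ) fun μ => (E μ).subtypeₗᵢ :=
    LinearMap.IsSymmetric.orthogonalFamily_eigenspaces hs
  refine ⟨Σ μ : ℝ, w μ, fun j => (b j.1 j.2 : H), fun j => j.1, ?_, ?_, ?_⟩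
  · exact hof.orthonormal_sigma_orthonormal (fun μ => (b μ).orthonormal)
  · intro j
    exact Module.End.mem_eigenspace_iff.1 (b j.1 j.2).2
  · rw [eq_bot_iff, ← ContinuousLinearMap.orthogonalComplement_iSup_eigenspaces_eq_bot hT hs]
    intro x hx
    rw [← Submodule.iInf_orthogonal, Submodule.mem_iInf]
    intro μ
    have hx' : ∀ i : w μ, ⟪((b μ i : E μ) : H), x⟫ = 0 := fun i =>
      Submodule.mem_orthogonal _ _ |>.1 hx _ (Submodule.subset_span ⟨⟨μ, i⟩, rfl⟩)
    rw [Submodule.mem_orthogonal]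
    intro y hy
    have h1 := ((b μ).hasSum_repr ⟨y, hy⟩).mapL
      ((innerSL ℝ x).comp (E μ).subtypeL)
    have h2 : (fun i => ((innerSL ℝ x).comp (E μ).subtypeL) ((b μ).repr ⟨y, hy⟩ i • b μ i))
        = fun _ => 0 := by
      funext i
      rw [map_smul]
      change _ • ⟪x, ((b μ i : E μ) : H)⟫ = (0 : ℝ)
      rw [real_inner_comm, hx' i, smul_zero]
    rw [h2] at h1
    have := h1.unique hasSum_zero
    rw [real_inner_comm]
    simpa using this

/-- Assume `a` is symmetric, `ι` injective, compact with dense range,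
`H` separable and `V` infinite dimensional.  Then there are a nondecreasing sequence
`(λ_k)` of positive reals diverging to `+∞` and elements `u_k ∈ V` solving the
variational eigenvalue problem `a (u_k) v = λ_k ⟪ι u_k, ι v⟫` for all `v`, such that
`(ι u_k)` is a Hilbert (orthonormal) basis of `H`, i.e. it is an orthonormal family
whose span is dense in `H`. -/
theorem stmt6
    {V H : Type*}
    [NormedAddCommGroup V] [InnerProductSpace ℝ V] [CompleteSpace V]
    [NormedAddCommGroup H] [InnerProductSpace ℝ H] [CompleteSpace H]
    [TopologicalSpace.SeparableSpace H]
    (ι : V →L[ℝ] H) (a : V →L[ℝ] V →L[ℝ] ℝ)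
    (α : ℝ) (hα : 0 < α) (hcoer : ∀ v : V, α * ‖v‖ ^ 2 ≤ a v v)
    (hsymm : ∀ u v : V, a u v = a v u)
    (hinj : Function.Injective ι)
    (hcompact : IsCompactOperator ι)
    (hdense : DenseRange ι)
    (hinf : ¬ FiniteDimensional ℝ V) :
    ∃ (lam : ℕ → ℝ) (u : ℕ → V),
      Monotone lam ∧
      (∀ k, 0 < lam k) ∧
      Filter.Tendsto lam Filter.atTop Filter.atTop ∧
      (∀ k, ∀ v : V, a (u k) v = lam k * ⟪ι (u k), ι v⟫) ∧
      Orthonormal ℝ (fun k => ι (u k)) ∧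
      (Submodule.span ℝ (Set.range fun k => ι (u k))).topologicalClosure = ⊤ := by
  have hco : IsCoercive a := ⟨α, hα, fun v => by simpa [pow_two, mul_assoc] using hcoer v⟩
  let B := hco.continuousLinearEquivOfBilin
  let S : H →L[ℝ] V := (B.symm : V →L[ℝ] V) ∘L (ContinuousLinearMap.adjoint ι)
  have hS : ∀ f v, a (S f) v = ⟪f, ι v⟫ := by
    intro f v
    rw [← hco.continuousLinearEquivOfBilin_apply]
    change ⟪B (B.symm (ContinuousLinearMap.adjoint ι f)), v⟫ = _
    rw [B.apply_symm_apply, ContinuousLinearMap.adjoint_inner_left]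
  let T : H →L[ℝ] H := ι ∘L S
  have hTc : IsCompactOperator T := hcompact.comp_clm S
  have hTs : T.IsSymmetric := by
    intro f g
    change ⟪ι (S f), g⟫ = ⟪f, ι (S g)⟫
    rw [real_inner_comm, ← hS, ← hS, hsymm]
  have hS0 : ∀ f, S f = 0 → f = 0 := by
    intro f hf
    have h1 : ∀ v, ⟪f, ι v⟫ = 0 := fun v => by rw [← hS, hf]; simp
    exact hdense.eq_zero_of_inner_left (𝕜 := ℝ) h1
  obtain ⟨J, e, μ, he, hTe, hspan⟩ := exists_orthonormal_eigen T hTc hTs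
  have hT0 : ∀ j, ι (S (e j)) = μ j • e j := hTe
  have hμ : ∀ j, 0 < μ j := by
    intro j
    have h1 : a (S (e j)) (S (e j)) = μ j := by
      rw [hS, hT0, inner_smul_right, real_inner_self_eq_norm_sq, he.1]; simp
    have h2 : S (e j) ≠ 0 := fun h => he.ne_zero j (hS0 _ h)
    have h3 := hcoer (S (e j))
    have h4 : 0 < ‖S (e j)‖ := norm_pos_iff.2 h2
    rw [h1] at h3
    have : 0 < α * ‖S (e j)‖ ^ 2 := by positivity
    linarith
  let w : J → V := fun j => (μ j)⁻¹ • S (e j)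
  have hw : ∀ j, ι (w j) = e j := by
    intro j
    simp only [w, map_smul, hT0, smul_smul, inv_mul_cancel₀ (hμ j).ne', one_smul]
  have haw : ∀ j v, a (w j) v = (μ j)⁻¹ * ⟪ι (w j), ι v⟫ := by
    intro j v
    rw [hw]
    simp [w, hS]
  have hfin : ∀ c : ℝ, {j | (μ j)⁻¹ ≤ c}.Finite := by
    intro c
    obtain ⟨K, hK, hKs⟩ :=
      IsCompactOperator.image_closedBall_subset_compact (f := (ι : V →ₗ[ℝ] H)) hcompact
        (Real.sqrt (c / α))
    refine finite_of_orthonormal_compact e he K hK _ (fun j hj => ?_)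
    apply hKs
    refine ⟨w j, ?_, hw j⟩
    rw [mem_closedBall_zero_iff]
    apply Real.le_sqrt_of_sq_le
    rw [le_div_iff₀ hα]
    have h1 := hcoer (w j)
    rw [haw, hw, real_inner_self_eq_norm_sq, he.1] at h1
    have h2 : (μ j)⁻¹ ≤ c := hj
    linarith
  have hclos : (Submodule.span ℝ (Set.range e)).topologicalClosure = ⊤ :=
    (Submodule.topologicalClosure_eq_top_iff).2 hspan
  haveI : Infinite J := by
    by_contra hJ
    rw [not_infinite_iff_finite] at hJ
    haveI : FiniteDimensional ℝ (Submodule.span ℝ (Set.range e)) :=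
      FiniteDimensional.span_of_finite ℝ (Set.finite_range e)
    have h1 : Submodule.span ℝ (Set.range e) = ⊤ := by
      rw [← hclos]
      exact ((Submodule.closed_of_finiteDimensional _).submodule_topologicalClosure_eq).symm
    haveI : FiniteDimensional ℝ H := by
      rw [h1] at this
      exact Module.Finite.equiv (Submodule.topEquiv (R := ℝ) (M := H))
    exact hinf (FiniteDimensional.of_injective (ι : V →ₗ[ℝ] H) hinj)
  obtain ⟨σ, hσ⟩ := exists_sorted_enum (fun j => (μ j)⁻¹) hfin
  refine ⟨fun n => (μ (σ n))⁻¹, fun n => w (σ n), hσ, fun k => inv_pos.2 (hμ _), ?_,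
    fun k v => haw _ v, ?_, ?_⟩
  · rw [Filter.tendsto_atTop, ← Nat.cofinite_eq_atTop]
    intro c
    rw [Filter.eventually_cofinite]
    refine ((hfin c).preimage σ.injective.injOn).subset (fun n hn => ?_)
    exact (not_le.1 hn).le
  · simp only [hw]
    exact he.comp σ σ.injective
  · simp only [hw]
    have : (Set.range fun k => e (σ k)) = Set.range e := σ.surjective.range_comp e
    rw [this, hclos]
end

section
/- Let A and B be bounded self-adjoint operators on a nontrivial complex Hilbert space H. Then every point of the (real) spectrum of B lies within distance ‖A − B‖ of the (real) spectrum of A, i.e. spectrum(B) ⊆ { x ∈ ℝ : dist(x, spectrum(A)) ≤ ‖A − B‖ }. -/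
/-- Let `A` and `B` be bounded self-adjoint operators on a nontrivial
complex Hilbert space `H`.  Then every point of the spectrum of `B` (which is real,
`B` being self-adjoint) lies within distance `‖A − B‖` of the spectrum of `A`. -/
theorem stmt7
    {H : Type*} [NormedAddCommGroup H] [InnerProductSpace ℂ H] [CompleteSpace H]
    [Nontrivial H]
    (A B : H →L[ℂ] H) (hA : IsSelfAdjoint A) (hB : IsSelfAdjoint B) :
    spectrum ℂ B ⊆ {z : ℂ | Metric.infDist z (spectrum ℂ A) ≤ ‖A - B‖} := by
  intro z hz
  simp only [Set.mem_ofPred_eq]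
  by_contra! hlt
  have hd : 0 < Metric.infDist z (spectrum ℂ A) := lt_of_le_of_lt (norm_nonneg _) hlt
  have hle : ∀ x ∈ spectrum ℂ A, Metric.infDist z (spectrum ℂ A) ≤ ‖z - x‖ := by
    intro x hx
    rw [← dist_eq_norm]
    exact Metric.infDist_le_dist_of_mem hx
  have hne : ∀ x ∈ spectrum ℂ A, z - x ≠ 0 := fun x hx =>
    norm_pos_iff.mp (hd.trans_le (hle x hx))
  have hAn : IsStarNormal A := hA.isStarNormal
  have hc : ContinuousOn (fun x : ℂ => (z - x)⁻¹) (spectrum ℂ A) :=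
    ContinuousOn.inv₀ (by fun_prop) hne
  have hR : ‖cfc (fun x : ℂ => (z - x)⁻¹) A‖ ≤ (Metric.infDist z (spectrum ℂ A))⁻¹ := by
    refine norm_cfc_le (by positivity) fun x hx => ?_
    rw [norm_inv]
    exact inv_anti₀ hd (hle x hx)
  have hzA : cfc (fun x : ℂ => z - x) A = algebraMap ℂ (H →L[ℂ] H) z - A := by
    rw [cfc_sub (fun _ => z) (fun x => x) A, cfc_const z A, cfc_id' ℂ A]
  have h1 : (algebraMap ℂ (H →L[ℂ] H) z - A) * cfc (fun x : ℂ => (z - x)⁻¹) A = 1 := by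
    rw [← hzA, ← cfc_mul (fun x : ℂ => z - x) (fun x : ℂ => (z - x)⁻¹) A (by fun_prop) hc,
      ← cfc_const_one ℂ A]
    exact cfc_congr fun x hx => mul_inv_cancel₀ (hne x hx)
  have hzu : IsUnit (algebraMap ℂ (H →L[ℂ] H) z - A) := by
    by_contra h
    exact hne z h (sub_self z)
  generalize cfc (fun x : ℂ => (z - x)⁻¹) A = R at hR h1
  have hn : ‖-(R * (A - B))‖ < 1 := by
    rw [norm_neg]
    calc ‖R * (A - B)‖ ≤ ‖R‖ * ‖A - B‖ := norm_mul_le _ _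
      _ ≤ (Metric.infDist z (spectrum ℂ A))⁻¹ * ‖A - B‖ := by gcongr
      _ < (Metric.infDist z (spectrum ℂ A))⁻¹ * Metric.infDist z (spectrum ℂ A) := by gcongr
      _ = 1 := inv_mul_cancel₀ hd.ne'
  have hu := hzu.mul (isUnit_one_sub_of_norm_lt_one hn)
  have he : (algebraMap ℂ (H →L[ℂ] H) z - A) * (1 - -(R * (A - B)))
      = algebraMap ℂ (H →L[ℂ] H) z - B := by
    rw [sub_neg_eq_add, mul_add, mul_one, ← mul_assoc, h1, one_mul]
    abel
  rw [he] at hu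
  exact hz hu
end

section
/- Let T and (T_n)_{n∈ℕ} be bounded self-adjoint operators on a nontrivial complex Hilbert space H with ‖T_n − T‖ → 0 as n → ∞. Then the (real) spectra converge in the Hausdorff metric: hausdorffDist(spectrum(T_n), spectrum(T)) → 0. In particular every spectral point of T is a limit of spectral points of T_n, and no spurious spectral points appear: sup_{ν ∈ spectrum(T_n)} dist(ν, spectrum(T)) → 0. -/
open Filter

/-- Spectral points of `b` lie within `‖b - a‖` of the spectrum of the self-adjoint `a`. -/
theorem infDist_spectrum_le
    {H : Type*} [NormedAddCommGroup H] [InnerProductSpace ℂ H] [CompleteSpace H]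
    [Nontrivial H] (a b : H →L[ℂ] H) (ha : IsSelfAdjoint a) (ν : ℂ)
    (hν : ν ∈ spectrum ℂ b) : Metric.infDist ν (spectrum ℂ a) ≤ ‖b - a‖ := by
  by_contra! hlt
  have hn : IsStarNormal a := ha.isStarNormal
  set d := Metric.infDist ν (spectrum ℂ a) with hd
  have hdpos : 0 < d := lt_of_le_of_lt (norm_nonneg _) hlt
  have hdist : ∀ x ∈ spectrum ℂ a, d ≤ ‖ν - x‖ := fun x hx => by
    rw [← dist_eq_norm]; exact Metric.infDist_le_dist_of_mem hx
  have hne : ∀ x ∈ spectrum ℂ a, ν - x ≠ 0 := fun x hx =>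
    norm_pos_iff.mp (hdpos.trans_le (hdist x hx))
  have hcont : ContinuousOn (fun x : ℂ => (ν - x)⁻¹) (spectrum ℂ a) :=
    ContinuousOn.inv₀ (by fun_prop) hne
  set r := cfc (fun x : ℂ => (ν - x)⁻¹) a with hr
  have hrn : ‖r‖ ≤ d⁻¹ := norm_cfc_le (by positivity) fun x hx => by
    rw [norm_inv]; exact inv_anti₀ hdpos (hdist x hx)
  have hs : cfc (fun x : ℂ => ν - x) a = algebraMap ℂ (H →L[ℂ] H) ν - a := by
    rw [cfc_sub (fun _ => ν) (fun x => x) a, cfc_const ν a, cfc_id' ℂ a]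
  have h1 : (algebraMap ℂ (H →L[ℂ] H) ν - a) * r = 1 := by
    rw [← hs, hr, ← cfc_mul _ _ a (by fun_prop) hcont, ← cfc_one ℂ a]
    exact cfc_congr fun x hx => mul_inv_cancel₀ (hne x hx)
  have hu : IsUnit (algebraMap ℂ (H →L[ℂ] H) ν - a) := by
    rw [← hs, isUnit_cfc_iff _ a]
    exact hne
  have hlt1 : ‖r * (b - a)‖ < 1 := by
    calc ‖r * (b - a)‖ ≤ ‖r‖ * ‖b - a‖ := norm_mul_le _ _
      _ ≤ d⁻¹ * ‖b - a‖ := by gcongr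
      _ < d⁻¹ * d := by gcongr
      _ = 1 := inv_mul_cancel₀ hdpos.ne'
  have hu2 := hu.mul (isUnit_one_sub_of_norm_lt_one hlt1)
  rw [mul_sub, mul_one, ← mul_assoc, h1, one_mul, sub_sub_sub_cancel_right] at hu2 
  exact hν hu2


/-- Let `T` and `(T_n)` be bounded self-adjoint operators on a
nontrivial complex Hilbert space with `‖T_n − T‖ → 0`.  Then the spectra converge in
the Hausdorff metric, and in particular no spurious spectral points appear: for every
`ε > 0`, eventually every spectral point of `T_n` is within `ε` of the spectrum of `T`. -/
theorem stmt8
    {H : Type*} [NormedAddCommGroup H] [InnerProductSpace ℂ H] [CompleteSpace H]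
    [Nontrivial H]
    (T : H →L[ℂ] H) (Tn : ℕ → H →L[ℂ] H)
    (hT : IsSelfAdjoint T) (hTn : ∀ n, IsSelfAdjoint (Tn n))
    (hconv : Tendsto (fun n => ‖Tn n - T‖) atTop (nhds 0)) :
    Tendsto (fun n => Metric.hausdorffDist (spectrum ℂ (Tn n)) (spectrum ℂ T))
        atTop (nhds 0) ∧
    ∀ ε : ℝ, 0 < ε → ∀ᶠ n in atTop,
      ∀ ν ∈ spectrum ℂ (Tn n), Metric.infDist ν (spectrum ℂ T) < ε := by

  have hle : ∀ n, Metric.hausdorffDist (spectrum ℂ (Tn n)) (spectrum ℂ T) ≤ ‖Tn n - T‖ := fun n =>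
    Metric.hausdorffDist_le_of_infDist (norm_nonneg _)
      (fun x hx => infDist_spectrum_le T (Tn n) hT x hx)
      (fun x hx => by
        rw [norm_sub_rev]; exact infDist_spectrum_le (Tn n) T (hTn n) x hx)
  refine ⟨squeeze_zero (fun _ => Metric.hausdorffDist_nonneg) hle hconv, fun ε hε => ?_⟩
  filter_upwards [hconv.eventually_lt_const hε] with n hn ν hν
  exact (infDist_spectrum_le T (Tn n) hT ν hν).trans_lt hn
end

section
/- Let T and (T_n)_{n∈ℕ} be compact self-adjoint operators on a complex Hilbert space H with ‖T_n − T‖ → 0. Let μ ∈ ℝ, μ ≠ 0, be an eigenvalue of T whose eigenspace ker(T − μI) has finite dimension m ≥ 1, and let ε ∈ (0, |μ|/2) be such that spectrum(T) ∩ [μ − 2ε, μ + 2ε] = {μ}. Then there exists N such that for all n ≥ N the sum of the eigenspaces of T_n corresponding to eigenvalues ν with |ν − μ| ≤ ε has dimension exactly m; that is, exactly m discrete eigenvalues of T_n, counted with multiplicity, converge to μ. -/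
open Filter Module.End

lemma aux_norm {H : Type*} [NormedAddCommGroup H] [InnerProductSpace ℂ H]
    (A : H →ₗ[ℂ] H) (hA : A.IsSymmetric) (s : Finset ℂ) (g : ℂ → H)
    (hg : ∀ ν, g ν ∈ eigenspace A ν) :
    ‖∑ ν ∈ s, g ν‖ ^ 2 = ∑ ν ∈ s, ‖g ν‖ ^ 2 := by
  have := hA.orthogonalFamily_eigenspaces.norm_sum (fun ν => (⟨g ν, hg ν⟩ : eigenspace A ν)) s
  simpa using this

lemma aux_sub {H : Type*} [NormedAddCommGroup H] [InnerProductSpace ℂ H]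
    (A : H →ₗ[ℂ] H) (hA : A.IsSymmetric) (μ : ℂ) (s : Finset ℂ) (g : ℂ → H)
    (hg : ∀ ν, g ν ∈ eigenspace A ν) :
    ‖A (∑ ν ∈ s, g ν) - μ • (∑ ν ∈ s, g ν)‖ ^ 2 = ∑ ν ∈ s, (‖ν - μ‖ * ‖g ν‖) ^ 2 := by
  have h1 : A (∑ ν ∈ s, g ν) - μ • (∑ ν ∈ s, g ν) = ∑ ν ∈ s, (ν - μ) • g ν := by
    rw [map_sum, Finset.smul_sum, ← Finset.sum_sub_distrib]
    refine Finset.sum_congr rfl fun ν _ => ?_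
    rw [mem_eigenspace_iff.1 (hg ν), sub_smul]
  rw [h1, aux_norm A hA s _ (fun ν => Submodule.smul_mem _ _ (hg ν))]
  simp [norm_smul]

/-- spectral subspace -/
def specSub {H : Type*} [NormedAddCommGroup H] [InnerProductSpace ℂ H]
    (A : H →ₗ[ℂ] H) (μ δ : ℝ) : Submodule ℂ H :=
  ⨆ (ν : ℝ) (_ : |ν - μ| ≤ δ), eigenspace A (ν : ℂ)

lemma specSub_eq {H : Type*} [NormedAddCommGroup H] [InnerProductSpace ℂ H]
    (A : H →ₗ[ℂ] H) (hA : A.IsSymmetric) (μ δ : ℝ) :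
    specSub A μ δ = ⨆ (ν : ℂ) (_ : ‖ν - μ‖ ≤ δ), eigenspace A ν := by
  apply le_antisymm
  · refine iSup₂_le fun ν hν => ?_
    refine le_iSup₂_of_le (ν : ℂ) ?_ le_rfl
    rw [← Complex.ofReal_sub, Complex.norm_real]; exact hν
  · refine iSup₂_le fun ν hν => ?_
    by_cases h : eigenspace A ν = ⊥
    · rw [h]; exact bot_le
    · have h2 := hA.conj_eigenvalue_eq_self (hasEigenvalue_iff.2 h)
      obtain ⟨r, rfl⟩ := Complex.conj_eq_iff_real.1 h2
      rw [← Complex.ofReal_sub, Complex.norm_real] at hν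
      exact le_iSup₂_of_le r hν le_rfl

lemma specSub_upper {H : Type*} [NormedAddCommGroup H] [InnerProductSpace ℂ H]
    (A : H →ₗ[ℂ] H) (hA : A.IsSymmetric) (μ δ : ℝ) (hδ : 0 ≤ δ) (x : H)
    (hx : x ∈ specSub A μ δ) : ‖A x - (μ : ℂ) • x‖ ≤ δ * ‖x‖ := by
  rw [specSub_eq A hA, Submodule.mem_iSup_iff_exists_finsupp] at hx
  obtain ⟨f, hf, rfl⟩ := hx
  have hf1 : ∀ ν, f ν ∈ eigenspace A ν := fun ν =>
    (iSup_le fun _ => le_rfl : (⨆ (_ : ‖ν - μ‖ ≤ δ), eigenspace A ν) ≤ eigenspace A ν) (hf ν)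
  have hf2 : ∀ ν : ℂ, ¬ ‖ν - μ‖ ≤ δ → f ν = 0 := fun ν h => by
    have := hf ν
    simpa [h] using this
  refine le_of_sq_le_sq ?_ (by positivity)
  rw [Finsupp.sum, aux_sub A hA _ _ _ hf1, mul_pow, aux_norm A hA _ _ hf1, Finset.mul_sum]
  refine Finset.sum_le_sum fun ν _ => ?_
  by_cases h : ‖ν - μ‖ ≤ δ
  · rw [← mul_pow]; gcongr
  · simp [hf2 ν h]

lemma specSub_lower {H : Type*} [NormedAddCommGroup H] [InnerProductSpace ℂ H] [CompleteSpace H]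
    (A : H →L[ℂ] H) (hAs : IsSelfAdjoint A) (hc : IsCompactOperator A)
    (μ δ : ℝ) (hδ : 0 ≤ δ) (x : H)
    (hx : x ∈ (specSub (A : H →ₗ[ℂ] H) μ δ)ᗮ) : δ * ‖x‖ ≤ ‖A x - (μ : ℂ) • x‖ := by
  have hA : (A : H →ₗ[ℂ] H).IsSymmetric := hAs.isSymmetric
  set E := specSub (A : H →ₗ[ℂ] H) μ δ with hE
  have hd : Dense ((⨆ ν : ℂ, eigenspace (A : H →ₗ[ℂ] H) ν : Submodule ℂ H) : Set H) := by
    rw [Submodule.dense_iff_topologicalClosure_eq_top, Submodule.topologicalClosure_eq_top_iff]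
    exact ContinuousLinearMap.orthogonalComplement_iSup_eigenspaces_eq_bot hc hA
  have key : ∀ y : H, δ * ‖Eᗮ.starProjection y‖ ≤ ‖A y - (μ : ℂ) • y‖ := by
    intro y
    refine hd.induction (P := fun y => δ * ‖Eᗮ.starProjection y‖ ≤ ‖A y - (μ : ℂ) • y‖)
      ?_ (isClosed_le (by fun_prop) (by fun_prop)) y
    intro y hy
    rw [SetLike.mem_coe, Submodule.mem_iSup_iff_exists_finsupp] at hy
    obtain ⟨f, hf, rfl⟩ := hy
    have hP : ∀ ν : ℂ, ‖ν - μ‖ ≤ δ → Eᗮ.starProjection (f ν) = 0 := fun ν h => by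
      rw [Submodule.starProjection_apply_eq_zero_iff]
      apply Submodule.le_orthogonal_orthogonal
      rw [hE, specSub_eq _ hA]
      exact (le_iSup₂_of_le ν h le_rfl :
        eigenspace (A : H →ₗ[ℂ] H) ν ≤ _) (hf ν)
    have hQ : ∀ ν : ℂ, ¬ ‖ν - μ‖ ≤ δ → Eᗮ.starProjection (f ν) = f ν := fun ν h => by
      rw [Submodule.starProjection_eq_self_iff]
      have h1 : E ≤ (eigenspace (A : H →ₗ[ℂ] H) ν)ᗮ := by
        rw [hE, specSub_eq _ hA]
        refine iSup₂_le fun ν' h' => ?_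
        have hne : ν' ≠ ν := by rintro rfl; exact h h'
        exact hA.orthogonalFamily_eigenspaces.isOrtho hne
      exact Submodule.orthogonal_le h1 (Submodule.le_orthogonal_orthogonal _ (hf ν))
    have hg : ∀ ν, Eᗮ.starProjection (f ν) ∈ eigenspace (A : H →ₗ[ℂ] H) ν := fun ν => by
      by_cases h : ‖ν - μ‖ ≤ δ
      · rw [hP ν h]; exact Submodule.zero_mem _
      · rw [hQ ν h]; exact hf ν
    refine le_of_sq_le_sq ?_ (norm_nonneg _)
    have h3 := aux_sub (A : H →ₗ[ℂ] H) hA μ f.support f hf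
    rw [ContinuousLinearMap.coe_coe] at h3
    rw [Finsupp.sum, h3, map_sum, mul_pow, aux_norm _ hA _ _ hg, Finset.mul_sum]
    refine Finset.sum_le_sum fun ν _ => ?_
    rw [← mul_pow]
    by_cases h : ‖ν - μ‖ ≤ δ
    · rw [hP ν h]; simp; positivity
    · rw [hQ ν h]; push Not at h; gcongr
  have := key x
  rwa [Submodule.starProjection_eq_self_iff.2 hx] at this

lemma dim_aux {H : Type*} [NormedAddCommGroup H] [InnerProductSpace ℂ H]
    (P Q : Submodule ℂ H) [FiniteDimensional ℂ Q] (h : ∀ x ∈ P, x ∈ Qᗮ → x = 0) :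
    FiniteDimensional ℂ P ∧ Module.finrank ℂ P ≤ Module.finrank ℂ Q := by
  let φ : P →ₗ[ℂ] Q := (Q.orthogonalProjectionOnto : H →ₗ[ℂ] Q) ∘ₗ P.subtype
  have hφ : Function.Injective φ := by
    rw [injective_iff_map_eq_zero]
    intro x hx
    have : (x : H) ∈ Qᗮ := Submodule.orthogonalProjectionOnto_eq_zero_iff.1 hx
    exact Subtype.ext (h x x.2 this)
  exact ⟨Module.Finite.of_injective φ hφ, LinearMap.finrank_le_finrank_of_injective hφ⟩

/-- Let `T` and `(T_n)` be compact self-adjoint operators on a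
complex Hilbert space with `‖T_n − T‖ → 0`.  Let `μ ≠ 0` be a real eigenvalue of `T`
whose eigenspace `ker (T − μI)` has finite dimension `m ≥ 1`, and let
`ε ∈ (0, |μ|/2)` be such that `spectrum T ∩ [μ − 2ε, μ + 2ε] = {μ}`.  Then for all
large `n` the sum of the eigenspaces of `T_n` for eigenvalues `ν` with `|ν − μ| ≤ ε`
has dimension exactly `m`: exactly `m` discrete eigenvalues, counted with
multiplicity, converge to `μ`. -/
theorem stmt11
    {H : Type*} [NormedAddCommGroup H] [InnerProductSpace ℂ H] [CompleteSpace H]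
    (T : H →L[ℂ] H) (Tn : ℕ → H →L[ℂ] H)
    (hTcomp : IsCompactOperator T) (hTncomp : ∀ n, IsCompactOperator (Tn n))
    (hT : IsSelfAdjoint T) (hTn : ∀ n, IsSelfAdjoint (Tn n))
    (hconv : Tendsto (fun n => ‖Tn n - T‖) atTop (nhds 0))
    (μ : ℝ) (hμ : μ ≠ 0) (m : ℕ) (hm : 1 ≤ m)
    (hfin : FiniteDimensional ℂ
      (Module.End.eigenspace (T : H →ₗ[ℂ] H) (μ : ℂ)))
    (hdim : Module.finrank ℂ
      (Module.End.eigenspace (T : H →ₗ[ℂ] H) (μ : ℂ)) = m)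
    (ε : ℝ) (hε0 : 0 < ε) (hε1 : ε < |μ| / 2)
    (hsep : spectrum ℂ T ∩ (Complex.ofReal '' Set.Icc (μ - 2 * ε) (μ + 2 * ε))
      = {(μ : ℂ)}) :
    ∃ N : ℕ, ∀ n ≥ N,
      Module.finrank ℂ
        ↥(⨆ (ν : ℝ) (_ : |ν - μ| ≤ ε),
          Module.End.eigenspace ((Tn n : H →ₗ[ℂ] H)) (ν : ℂ)) = m := by
  have hTs : (T : H →ₗ[ℂ] H).IsSymmetric := hT.isSymmetric
  have hK : specSub (T : H →ₗ[ℂ] H) μ (2 * ε) = eigenspace (T : H →ₗ[ℂ] H) (μ : ℂ) := by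
    apply le_antisymm
    · refine iSup₂_le fun ν hν => ?_
      by_cases h : eigenspace (T : H →ₗ[ℂ] H) (ν : ℂ) = ⊥
      · rw [h]; exact bot_le
      · have h1 : (ν : ℂ) ∈ spectrum ℂ T := by
          intro hu
          apply h
          rw [eq_bot_iff]
          intro x hx
          obtain ⟨u, hu⟩ := hu
          have h2 : (u : H →L[ℂ] H) x = 0 := by
            rw [hu]
            have := mem_eigenspace_iff.1 hx
            rw [ContinuousLinearMap.coe_coe] at this
            simp [Algebra.algebraMap_eq_smul_one, this]
          have h3 : ((↑u⁻¹ : H →L[ℂ] H) * (u : H →L[ℂ] H)) x = 0 := by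
            rw [mul_apply_eq_comp, h2, map_zero]
          simpa using h3
        have h2 : (ν : ℂ) ∈ ({(μ : ℂ)} : Set ℂ) := by
          rw [← hsep]
          rw [abs_le] at hν
          exact ⟨h1, ν, ⟨by linarith, by linarith⟩, rfl⟩
        rw [Set.mem_singleton_iff.1 h2]
    · exact le_iSup₂_of_le μ (by simp [hε0.le]) le_rfl
  obtain ⟨N, hN⟩ := eventually_atTop.1 (hconv.eventually (gt_mem_nhds hε0))
  refine ⟨N, fun n hn => ?_⟩
  have hlt := hN n hn
  have hTns : (Tn n : H →ₗ[ℂ] H).IsSymmetric := (hTn n).isSymmetric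
  have hb : ∀ x, ‖Tn n x - T x‖ ≤ ‖Tn n - T‖ * ‖x‖ := fun x => (Tn n - T).le_opNorm x
  change Module.finrank ℂ (specSub (Tn n : H →ₗ[ℂ] H) μ ε) = m
  obtain ⟨hf, hle⟩ := dim_aux (specSub (Tn n : H →ₗ[ℂ] H) μ ε)
    (eigenspace (T : H →ₗ[ℂ] H) (μ : ℂ)) (fun x hx hx' => by
      have h1 := specSub_upper _ hTns μ ε hε0.le x hx
      rw [← hK] at hx'
      have h2 := specSub_lower T hT hTcomp μ (2 * ε) (by positivity) x hx'
      have h3 : ‖T x - (μ : ℂ) • x‖ ≤ ‖Tn n x - (μ : ℂ) • x‖ + ‖Tn n x - T x‖ := by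
        have := norm_sub_le (Tn n x - (μ : ℂ) • x) (Tn n x - T x)
        rwa [sub_sub_sub_cancel_left] at this
      have h4 := hb x
      rw [ContinuousLinearMap.coe_coe] at h1
      by_contra hne
      have := norm_pos_iff.2 hne
      nlinarith)
  obtain ⟨-, hge⟩ := dim_aux (eigenspace (T : H →ₗ[ℂ] H) (μ : ℂ))
    (specSub (Tn n : H →ₗ[ℂ] H) μ ε) (fun x hx hx' => by
      have h2 := specSub_lower (Tn n) (hTn n) (hTncomp n) μ ε hε0.le x hx'
      have h1 := mem_eigenspace_iff.1 hx
      rw [ContinuousLinearMap.coe_coe] at h1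
      rw [← h1] at h2
      have h4 := hb x
      by_contra hne
      have := norm_pos_iff.2 hne
      nlinarith)
  omega
end
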